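/- arXiv:1710.09773 — 5 statements merged into one kernel-verified Lean document; each statement's English description precedes it below -/
import Mathlib

section
/- Let q ≥ 1 be a natural number, let g, h ∈ ℂ[Y] be polynomials with g ≠ 0 and g(Y) = h(Y^q) (that is, g = h.comp (Y^q)), and let y₀ ∈ ℂ with y₀ ≠ 0. If k is the root multiplicity of y₀ in g, then (Y^q − y₀^q)^k divides g in ℂ[Y]. -/
open Polynomial

/-!
Put `c = y₀ ^ q` and factor `h = (Y - c) ^ m * u` with `u(c) ≠ 0`. Then
`g = (Y ^ q - c) ^ m * u(Y ^ q)`, and `u(Y ^ q)` does not vanish at `y₀`. Since `c ≠ 0` and the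
characteristic is zero, `Y ^ q - c` is separable, so `y₀` has multiplicity at most one in it. Hence
the multiplicity of `y₀` in `g` is at most `m`, and `(Y ^ q - c) ^ m` divides `g`.
-/

/-- If `g ≠ 0`, `g(Y) = h(Y^q)` with `q ≥ 1`, `y₀ ≠ 0` and `k` is the root
multiplicity of `y₀` in `g`, then `(Y^q − y₀^q)^k` divides `g` in `ℂ[Y]`. -/
theorem pow_sub_pow_dvd_of_comp (q : ℕ) (hq : 1 ≤ q)
    (g h : Polynomial ℂ) (hg0 : g ≠ 0) (hg : g = h.comp (X ^ q))
    (y₀ : ℂ) (hy₀ : y₀ ≠ 0) :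
    (X ^ q - C (y₀ ^ q)) ^ (g.rootMultiplicity y₀) ∣ g := by
  have hh0 : h ≠ 0 := by
    rintro rfl
    simp [hg] at hg0
  obtain ⟨u, hu, hndvd⟩ := h.exists_eq_pow_rootMultiplicity_mul_and_not_dvd hh0 (y₀ ^ q)
  set m := h.rootMultiplicity (y₀ ^ q)
  have hfac : g = (X ^ q - C (y₀ ^ q)) ^ m * u.comp (X ^ q) := by
    rw [hg, hu, mul_comp, pow_comp, sub_comp, X_comp, C_comp]
  have hroot : ¬ (u.comp (X ^ q)).IsRoot y₀ := by
    rw [dvd_iff_isRoot] at hndvd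
    simpa [IsRoot, eval_comp] using hndvd
  have hsep : (X ^ q - C (y₀ ^ q) : ℂ[X]).Separable :=
    separable_X_pow_sub_C _ (by exact_mod_cast (by omega : q ≠ 0)) (pow_ne_zero q hy₀)
  have hle : g.rootMultiplicity y₀ ≤ m := by
    rw [hfac, rootMultiplicity_mul (hfac ▸ hg0), rootMultiplicity_eq_zero hroot, add_zero,
      ← count_roots, roots_pow, Multiset.count_nsmul, count_roots]
    exact mul_le_of_le_one_right (Nat.zero_le _) (rootMultiplicity_le_one_of_separable hsep y₀)
  exact (pow_dvd_pow _ hle).trans ⟨_, hfac⟩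
end

section
/- Let a < b be real numbers, n ∈ ℕ, and c : Fin (n+1) → ℝ with c 0 ≠ 0. Let x : ℝ → ℝ be integrable on (a,b) and f : ℝ → ℝ be infinitely differentiable on (a,b) (ContDiffOn ℝ ⊤ f (Set.Ioo a b)). If for almost every t ∈ (a,b) one has Σ_{j=0}^{n} c_j · (I_a^[n−j] x)(t) = f(t), then there exists y : ℝ → ℝ infinitely differentiable on (a,b) such that x = y almost everywhere on (a,b). -/
/-!
Write the equation as `∑ k ≤ n, d k • I_a^[k] x = f` a.e. on `(a,b)`, with some `d k ≠ 0`.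

If `d 0 ≠ 0`, solving for `x` shows that `x` agrees a.e. with
`v = (d 0)⁻¹ (f - ∑ k ≥ 1, d k • I_a^[k] x)`, which is continuous on `(a,b)`. Integrals do not see
the difference between `x` and `v`, so whenever `v` is `C^p` every `I_a^[k] x` with `k ≥ 1` is
`C^(p+1)`, and hence so is `v`; thus `v` is smooth (`smoothAE_of_leading`).

If `d 0 = 0`, the equation is one of lower order for `I_a x`, so by induction `I_a x` agrees a.e.
with a smooth function, hence everywhere on `(a,b)` by continuity. By Lebesgue's differentiation
theorem `x` is a.e. the derivative of `I_a x`, so it agrees a.e. with a smooth function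
(`smoothAE_of_indefInt`).
-/

open MeasureTheory

/-- The indefinite-integral operator `(I_a g)(t) = ∫_a^t g(s) ds`. -/
noncomputable def indefInt (a : ℝ) (g : ℝ → ℝ) : ℝ → ℝ := fun t => ∫ s in a..t, g s

/-- `g` agrees almost everywhere on `(a,b)` with a function that is smooth on `(a,b)`. -/
def SmoothAE (a b : ℝ) (g : ℝ → ℝ) : Prop :=
  ∃ y : ℝ → ℝ, ContDiffOn ℝ (⊤ : ℕ∞) y (Set.Ioo a b) ∧
    ∀ᵐ t ∂(volume.restrict (Set.Ioo a b)), g t = y t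

lemma intervalIntegrable_of_integrableOn_Ioo {a b : ℝ} (hab : a < b) {g : ℝ → ℝ}
    (hg : IntegrableOn g (Set.Ioo a b)) : IntervalIntegrable g volume a b :=
  (intervalIntegrable_iff_integrableOn_Ioo_of_le hab.le).2 hg

lemma continuousOn_indefInt {a b : ℝ} (hab : a < b) {g : ℝ → ℝ}
    (hg : IntegrableOn g (Set.Ioo a b)) : ContinuousOn (indefInt a g) (Set.Icc a b) := by
  have h := intervalIntegral.continuousOn_primitive_interval'
    (intervalIntegrable_of_integrableOn_Ioo hab hg) (Set.left_mem_uIcc)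
  rwa [Set.uIcc_of_le hab.le] at h

lemma integrableOn_indefInt {a b : ℝ} (hab : a < b) {g : ℝ → ℝ}
    (hg : IntegrableOn g (Set.Ioo a b)) : IntegrableOn (indefInt a g) (Set.Ioo a b) :=
  (continuousOn_indefInt hab hg).integrableOn_Icc.mono_set Set.Ioo_subset_Icc_self

lemma integrableOn_iterate_indefInt {a b : ℝ} (hab : a < b) {g : ℝ → ℝ}
    (hg : IntegrableOn g (Set.Ioo a b)) (k : ℕ) :
    IntegrableOn ((indefInt a)^[k] g) (Set.Ioo a b) := by
  induction k with
  | zero => exact hg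
  | succ k ih =>
    rw [Function.iterate_succ_apply']
    exact integrableOn_indefInt hab ih

/-- Integration gains one derivative, and it suffices that the integrand has a `C^p`
representative. -/
lemma contDiffOn_indefInt {a b : ℝ} {g v : ℝ → ℝ}
    (hg : IntegrableOn g (Set.Ioo a b)) {p : ℕ} (hv : ContDiffOn ℝ p v (Set.Ioo a b))
    (hgv : ∀ᵐ t ∂(volume.restrict (Set.Ioo a b)), g t = v t) :
    ContDiffOn ℝ (p + 1 : ℕ) (indefInt a g) (Set.Ioo a b) := by
  have hvi : IntegrableOn v (Set.Ioo a b) := hg.congr_fun_ae hgv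
  have hcongr : ∀ t ∈ Set.Ioo a b, indefInt a g t = indefInt a v t := by
    intro t ht
    apply intervalIntegral.integral_congr_ae
    rw [ae_restrict_iff' measurableSet_Ioo] at hgv
    filter_upwards [hgv] with s hs hst
    rw [Set.uIoc_of_le ht.1.le] at hst
    exact hs ⟨hst.1, hst.2.trans_lt ht.2⟩
  refine ContDiffOn.congr ?_ hcongr
  have hd : ∀ t ∈ Set.Ioo a b, HasDerivAt (indefInt a v) (v t) t := by
    intro t ht
    refine intervalIntegral.integral_hasDerivAt_right ?_ ?_ ?_
    · exact intervalIntegrable_of_integrableOn_Ioo ht.1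
        (hvi.mono_set (Set.Ioo_subset_Ioo_right ht.2.le))
    · exact hv.continuousOn.stronglyMeasurableAtFilter isOpen_Ioo t ht
    · exact hv.continuousOn.continuousAt (isOpen_Ioo.mem_nhds ht)
  push_cast
  rw [contDiffOn_succ_iff_deriv_of_isOpen isOpen_Ioo]
  refine ⟨fun t ht => (hd t ht).differentiableAt.differentiableWithinAt, fun h => ?_,
    hv.congr fun t ht => (hd t ht).deriv⟩
  exact absurd h (WithTop.coe_ne_top (α := ℕ∞))

/-- A function is a.e. the derivative of its indefinite integral, so smoothness descends. -/
lemma smoothAE_of_indefInt {a b : ℝ} (hab : a < b) {g : ℝ → ℝ}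
    (hg : IntegrableOn g (Set.Ioo a b)) (h : SmoothAE a b (indefInt a g)) : SmoothAE a b g := by
  obtain ⟨y, hy, hgy⟩ := h
  have heq : Set.EqOn (indefInt a g) y (Set.Ioo a b) :=
    Measure.eqOn_Ioo_of_ae_eq volume hgy
      ((continuousOn_indefInt hab hg).mono Set.Ioo_subset_Icc_self) hy.continuousOn
  refine ⟨deriv (indefInt a g),
    ((contDiffOn_infty_iff_deriv_of_isOpen isOpen_Ioo).1 (hy.congr heq)).2, ?_⟩
  rw [ae_restrict_iff' measurableSet_Ioo]
  filter_upwards [(intervalIntegrable_of_integrableOn_Ioo hab hg).ae_hasDerivAt_integral]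
    with t ht hts
  have h1 : t ∈ Set.uIcc a b := by
    rw [Set.uIcc_of_le hab.le]
    exact Set.Ioo_subset_Icc_self hts
  exact (ht h1 a Set.left_mem_uIcc).deriv.symm

/-- The bootstrapping step: the equation can be solved for `x` itself. -/
lemma smoothAE_of_leading {a b : ℝ} (hab : a < b) {x f : ℝ → ℝ} (n : ℕ) (d : ℕ → ℝ)
    (hd : d 0 ≠ 0) (hx : IntegrableOn x (Set.Ioo a b))
    (hf : ContDiffOn ℝ (⊤ : ℕ∞) f (Set.Ioo a b))
    (heq : ∀ᵐ t ∂(volume.restrict (Set.Ioo a b)),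
      ∑ k ∈ Finset.range (n + 1), d k * (indefInt a)^[k] x t = f t) : SmoothAE a b x := by
  set v : ℝ → ℝ := fun t =>
    (d 0)⁻¹ * (f t - ∑ k ∈ Finset.range n, d (k + 1) * (indefInt a)^[k + 1] x t) with hvdef
  have hxv : ∀ᵐ t ∂(volume.restrict (Set.Ioo a b)), x t = v t := by
    filter_upwards [heq] with t ht
    rw [Finset.sum_range_succ'] at ht
    simp only [hvdef, ← ht, Function.iterate_zero, id]
    field_simp
    ring
  have key : ∀ p : ℕ, (∀ k : ℕ, ContDiffOn ℝ p ((indefInt a)^[k + 1] x) (Set.Ioo a b)) →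
      ContDiffOn ℝ p v (Set.Ioo a b) := by
    intro p hp
    refine contDiffOn_const.mul ((hf.of_le (by exact_mod_cast le_top)).sub ?_)
    exact ContDiffOn.sum fun k _ => contDiffOn_const.mul (hp k)
  have hsmooth : ∀ p k : ℕ, ContDiffOn ℝ p ((indefInt a)^[k + 1] x) (Set.Ioo a b) := by
    intro p
    induction p with
    | zero =>
      intro k
      rw [Function.iterate_succ_apply']
      simpa using (continuousOn_indefInt hab
        (integrableOn_iterate_indefInt hab hx k)).mono Set.Ioo_subset_Icc_self
    | succ p ih =>
      intro k
      rw [Function.iterate_succ_apply']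
      cases k with
      | zero => exact contDiffOn_indefInt hx (key p ih) hxv
      | succ k =>
        exact contDiffOn_indefInt (integrableOn_iterate_indefInt hab hx (k + 1)) (ih k)
          (Filter.Eventually.of_forall fun _ => rfl)
  exact ⟨v, contDiffOn_infty.2 fun p => key p (hsmooth p), hxv⟩

lemma smoothAE_of_sum {a b : ℝ} (hab : a < b) {f : ℝ → ℝ}
    (hf : ContDiffOn ℝ (⊤ : ℕ∞) f (Set.Ioo a b)) (n : ℕ) :
    ∀ (d : ℕ → ℝ) (x : ℝ → ℝ), d n ≠ 0 → IntegrableOn x (Set.Ioo a b) →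
    (∀ᵐ t ∂(volume.restrict (Set.Ioo a b)),
      ∑ k ∈ Finset.range (n + 1), d k * (indefInt a)^[k] x t = f t) → SmoothAE a b x := by
  induction n with
  | zero => exact fun d x hd hx heq => smoothAE_of_leading hab 0 d hd hx hf heq
  | succ n ih =>
    intro d x hd hx heq
    by_cases h0 : d 0 = 0
    · refine smoothAE_of_indefInt hab hx
        (ih (fun k => d (k + 1)) _ hd (integrableOn_indefInt hab hx) ?_)
      filter_upwards [heq] with t ht
      rw [Finset.sum_range_succ'] at ht
      simpa [h0] using ht
    · exact smoothAE_of_leading hab (n + 1) d h0 hx hf heq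

/-- If `x` is integrable on `(a,b)`, `f` is infinitely differentiable on `(a,b)`,
`c 0 ≠ 0`, and `Σ_{j=0}^{n} c_j · (I_a^[n−j] x)(t) = f(t)` a.e. on `(a,b)`, then `x` agrees
a.e. on `(a,b)` with a function infinitely differentiable on `(a,b)`. -/
theorem smooth_solutions_of_integral_equation
    (a b : ℝ) (hab : a < b) (n : ℕ) (c : Fin (n + 1) → ℝ) (hc : c 0 ≠ 0)
    (x f : ℝ → ℝ) (hx : IntegrableOn x (Set.Ioo a b))
    (hf : ContDiffOn ℝ (⊤ : ℕ∞) f (Set.Ioo a b))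
    (heq : ∀ᵐ t ∂(volume.restrict (Set.Ioo a b)),
      ∑ j : Fin (n + 1), c j * (indefInt a)^[n - (j : ℕ)] x t = f t) :
    ∃ y : ℝ → ℝ, ContDiffOn ℝ (⊤ : ℕ∞) y (Set.Ioo a b) ∧
      ∀ᵐ t ∂(volume.restrict (Set.Ioo a b)), x t = y t := by
  -- Reindex by the number `k = n - j` of integrations.
  refine smoothAE_of_sum hab hf n (fun k => c (Fin.ofNat (n + 1) (n - k))) x ?_ hx ?_
  · simpa using hc
  · filter_upwards [heq] with t ht
    rw [← ht, ← Fin.sum_univ_eq_sum_range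
      (fun k => c (Fin.ofNat (n + 1) (n - k)) * (indefInt a)^[k] x t), ← Equiv.sum_comp Fin.revPerm]
    refine Finset.sum_congr rfl fun j _ => ?_
    have hj := j.is_lt
    have h1 : ((Fin.revPerm j : Fin (n + 1)) : ℕ) = n - j := by
      simp [Fin.val_rev]
    have h2 : Fin.ofNat (n + 1) (n - (n - (j : ℕ))) = j := by
      ext
      rw [Fin.val_ofNat, Nat.sub_sub_self (by omega), Nat.mod_eq_of_lt hj]
    rw [h1, h2]
end

section
/- Let a < b be real numbers, n ∈ ℕ, and c : Fin (n+1) → ℝ with c 0 ≠ 0. Let x : ℝ → ℝ be integrable on (a,b) and f : ℝ → ℝ be real analytic on a neighbourhood of each point of (a,b) (AnalyticOnNhd ℝ f (Set.Ioo a b)). If for almost every t ∈ (a,b) one has Σ_{j=0}^{n} c_j · (I_a^[n−j] x)(t) = f(t), then there exists y : ℝ → ℝ real analytic on a neighbourhood of each point of (a,b) such that x = y almost everywhere on (a,b). -/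
/-!
Write the equation as `P(I_a) x = f` with `P = Σ_j c_j X^(n-j)`, a nonzero polynomial because its
coefficient of degree `n` is `c_0`. Over `ℂ` the polynomial splits into linear factors, so it
suffices to invert a single factor `I_a - μ` within the class of integrable functions that are
a.e. equal to an analytic one, and to induct on the degree (`analytic_of_polynomial`).

For one factor (`analytic_of_first_order`), suppose `I_a x - μ x = h` a.e. with `h` analytic. If
`μ = 0`, then `I_a x = h` on all of `(a,b)` by continuity, and `x = h'` a.e. by Lebesgue's
differentiation theorem. If `μ ≠ 0`, then `v = I_a x` is a primitive of `μ⁻¹ (v - h)`, which is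
continuous, so `v` solves the linear equation `v' = μ⁻¹ (v - h)` classically. The integrating
factor `e^(-t/μ)` turns this into `(e^(-t/μ) v)' = -μ⁻¹ e^(-t/μ) h`, and a primitive of an analytic
function is analytic (`AnalyticAt.of_eventually_hasDerivAt`). Hence `v` is analytic, and so is
`μ⁻¹ (v - h)`, which equals `x` a.e.
-/

open MeasureTheory

open scoped Topology

/-- A primitive of a real-analytic function is real analytic: the power series is integrated term
by term. -/
theorem AnalyticAt.of_eventually_hasDerivAt {F g : ℝ → ℂ} {t₀ : ℝ}
    (hg : AnalyticAt ℝ g t₀) (hF : ∀ᶠ t in 𝓝 t₀, HasDerivAt F (g t) t) :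
    AnalyticAt ℝ F t₀ := by
  have ⟨p, hp⟩ := hg
  obtain ⟨ρ, hρ, hsum⟩ := Metric.eventually_nhds_iff.1 (hasFPowerSeriesAt_iff.1 hp)
  obtain ⟨ε, hε, hder⟩ := Metric.eventually_nhds_iff.1
    (hF.and (hg.eventually_analyticAt.mono fun t h => h.continuousAt))
  obtain ⟨r, hr0, hr⟩ := ENNReal.lt_iff_exists_nnreal_btwn.1 hp.radius_pos
  have hr0' : (0 : ℝ) < r := by exact_mod_cast hr0
  set δ : ℝ := min r (min ρ ε) with hδ
  have hδ0 : 0 < δ := by positivity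
  -- coefficients of the integrated series, with constant term `F t₀`
  let b : ℕ → ℂ := fun n => Nat.rec (F t₀) (fun k _ => ((k : ℝ) + 1)⁻¹ • p.coeff k) n
  let q : FormalMultilinearSeries ℝ ℝ ℂ := fun n =>
    ContinuousMultilinearMap.mkPiRing ℝ (Fin n) (b n)
  have hq : ∀ n, q.coeff n = b n := fun n => by
    simp [q, FormalMultilinearSeries.coeff]
  refine ⟨q, hasFPowerSeriesAt_iff.2 (Metric.eventually_nhds_iff.2 ⟨δ, hδ0, fun z hz => ?_⟩)⟩
  have hzδ : |z| < δ := by simpa using hz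
  have hs : ∀ s ∈ Set.uIcc 0 z, |s| ≤ |z| := fun s hs => by
    simpa using Set.abs_sub_left_of_mem_uIcc hs
  have hδr : δ ≤ r := min_le_left _ _
  have hδρ : δ ≤ ρ := (min_le_right _ _).trans (min_le_left _ _)
  have hδε : δ ≤ ε := (min_le_right _ _).trans (min_le_right _ _)
  have hd : ∀ s ∈ Set.uIcc 0 z, HasDerivAt (fun s => F (t₀ + s)) (g (t₀ + s)) s := fun s h => by
    apply HasDerivAt.comp_const_add
    refine (hder ?_).1
    simpa using (hs s h).trans_lt (hzδ.trans_le hδε)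
  have key := intervalIntegral.hasSum_integral_of_dominated_convergence (μ := volume)
    (a := 0) (b := z) (F := fun (n : ℕ) (s : ℝ) => s ^ n • p.coeff n)
    (f := fun s => g (t₀ + s))
    (fun n _ => ‖p n‖ * (r : ℝ) ^ n)
    (fun n => (by fun_prop : Continuous fun s : ℝ => s ^ n • p.coeff n).aestronglyMeasurable)
    (fun n => .of_forall fun s h => by
      rw [norm_smul, norm_pow, mul_comm, p.norm_apply_eq_norm_coef]
      gcongr
      exact (hs s (Set.uIoc_subset_uIcc h)).trans (hzδ.le.trans hδr))
    (.of_forall fun s h => p.summable_norm_mul_pow hr)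
    (by simp)
    (.of_forall fun s h => hsum (by
      simpa using (hs s (Set.uIoc_subset_uIcc h)).trans_lt (hzδ.trans_le hδρ)))
  have hint : IntervalIntegrable (fun s => g (t₀ + s)) volume 0 z := by
    refine ContinuousOn.intervalIntegrable fun s h => ContinuousAt.continuousWithinAt ?_
    refine ContinuousAt.comp (g := g) (hder ?_).2 (by fun_prop)
    simpa using (hs s h).trans_lt (hzδ.trans_le hδε)
  rw [intervalIntegral.integral_eq_sub_of_hasDerivAt hd hint, add_zero] at key
  rw [← hasSum_nat_add_iff' 1]
  simp only [Finset.range_one, Finset.sum_singleton, hq, pow_zero, one_smul]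
  convert key using 1
  · funext n
    rw [intervalIntegral.integral_smul_const, integral_pow]
    simp [b, div_eq_mul_inv, mul_assoc]
  · rfl

/-- The indefinite-integral operator `I_a` on complex-valued functions. -/
noncomputable def complexIndefInt (a : ℝ) (g : ℝ → ℂ) : ℝ → ℂ := fun t => ∫ s in a..t, g s

section
variable {a b : ℝ}

theorem intervalIntegrable_of_Ioo {g : ℝ → ℂ} (hab : a < b) (hg : IntegrableOn g (Set.Ioo a b)) :
    IntervalIntegrable g volume a b :=
  (intervalIntegrable_iff_integrableOn_Ioo_of_le hab.le).2 hg

theorem intervalIntegrable_left {g : ℝ → ℂ} (hab : a < b) (hg : IntegrableOn g (Set.Ioo a b))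
    {t : ℝ} (ht : t ∈ Set.Icc a b) : IntervalIntegrable g volume a t :=
  (intervalIntegrable_of_Ioo hab hg).mono_set (by
    rw [Set.uIcc_of_le ht.1, Set.uIcc_of_le hab.le]; exact Set.Icc_subset_Icc_right ht.2)

theorem continuousOn_complexIndefInt {g : ℝ → ℂ} (hab : a < b)
    (hg : IntegrableOn g (Set.Ioo a b)) : ContinuousOn (complexIndefInt a g) (Set.Icc a b) := by
  have := intervalIntegral.continuousOn_primitive_interval' (intervalIntegrable_of_Ioo hab hg)
    (Set.left_mem_uIcc)
  rwa [Set.uIcc_of_le hab.le] at this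

theorem integrableOn_complexIndefInt {g : ℝ → ℂ} (hab : a < b)
    (hg : IntegrableOn g (Set.Ioo a b)) : IntegrableOn (complexIndefInt a g) (Set.Ioo a b) :=
  (continuousOn_complexIndefInt hab hg).integrableOn_Icc.mono_set Set.Ioo_subset_Icc_self

theorem integrableOn_iterate {g : ℝ → ℂ} (hab : a < b)
    (hg : IntegrableOn g (Set.Ioo a b)) (i : ℕ) :
    IntegrableOn ((complexIndefInt a)^[i] g) (Set.Ioo a b) := by
  induction i with
  | zero => exact hg
  | succ i ih =>
    rw [Function.iterate_succ_apply']
    exact integrableOn_complexIndefInt hab ih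

/-- `I_a^[i] ((I_a - μ) x) = I_a^[i+1] x - μ I_a^[i] x` on `[a,b]`; outside this interval `x` need
not be integrable and linearity of the integral may fail. -/
theorem iterate_sub_smul {x : ℝ → ℂ} (hab : a < b) (hx : IntegrableOn x (Set.Ioo a b)) (μ : ℂ)
    (i : ℕ) : ∀ t ∈ Set.Icc a b,
      (complexIndefInt a)^[i] (fun s => complexIndefInt a x s - μ * x s) t =
        (complexIndefInt a)^[i + 1] x t - μ * (complexIndefInt a)^[i] x t := by
  induction i with
  | zero => intro t _; rfl
  | succ i ih =>
    intro t ht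
    rw [Function.iterate_succ_apply', Function.iterate_succ_apply' _ (i + 1),
      Function.iterate_succ_apply' _ i x]
    change ∫ s in a..t, _ = (∫ s in a..t, _) - μ * ∫ s in a..t, _
    rw [← intervalIntegral.integral_const_mul, ← intervalIntegral.integral_sub
      (intervalIntegrable_left hab (integrableOn_complexIndefInt hab
        (integrableOn_iterate hab hx i)) ht)
      ((intervalIntegrable_left hab (integrableOn_iterate hab hx i) ht).const_mul μ)]
    refine intervalIntegral.integral_congr fun s hs => ?_
    rw [Set.uIcc_of_le ht.1] at hs
    simpa only [Function.iterate_succ_apply' _ i x] using ih s ⟨hs.1, hs.2.trans ht.2⟩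

/-- The factor `I_a - μ` can be inverted among functions a.e. equal to an analytic one. -/
theorem analytic_of_first_order (hab : a < b) {x h : ℝ → ℂ} (hx : IntegrableOn x (Set.Ioo a b))
    (hh : AnalyticOnNhd ℝ h (Set.Ioo a b)) (μ : ℂ)
    (heq : ∀ᵐ t ∂(volume.restrict (Set.Ioo a b)), complexIndefInt a x t - μ * x t = h t) :
    ∃ y : ℝ → ℂ, AnalyticOnNhd ℝ y (Set.Ioo a b) ∧
      ∀ᵐ t ∂(volume.restrict (Set.Ioo a b)), x t = y t := by
  have hv := (continuousOn_complexIndefInt hab hx).mono Set.Ioo_subset_Icc_self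
  rcases eq_or_ne μ 0 with rfl | hμ
  · have hEq : Set.EqOn (complexIndefInt a x) h (Set.Ioo a b) :=
      Measure.eqOn_open_of_ae_eq (μ := volume) (by
        filter_upwards [heq] with t ht
        simpa using ht) isOpen_Ioo hv hh.continuousOn
    refine ⟨deriv h, hh.deriv, ?_⟩
    rw [ae_restrict_iff' measurableSet_Ioo]
    filter_upwards [(intervalIntegrable_of_Ioo hab hx).ae_hasDerivAt_integral] with t ht htI
    have h1 : HasDerivAt (complexIndefInt a x) (x t) t :=
      ht (by rw [Set.uIcc_of_le hab.le]; exact Set.Ioo_subset_Icc_self htI) a Set.left_mem_uIcc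
    rw [← h1.deriv]
    exact (hEq.eventuallyEq_of_mem (isOpen_Ioo.mem_nhds htI)).deriv_eq
  · set v := complexIndefInt a x with hvdef
    have hxv : ∀ᵐ t ∂(volume.restrict (Set.Ioo a b)), x t = μ⁻¹ * (v t - h t) := by
      filter_upwards [heq] with t ht
      rw [← ht]; field_simp; ring
    have hwc : ContinuousOn (fun t => μ⁻¹ * (v t - h t)) (Set.Ioo a b) :=
      continuousOn_const.mul (hv.sub hh.continuousOn)
    have hwi : IntegrableOn (fun t => μ⁻¹ * (v t - h t)) (Set.Ioo a b) := hx.congr_fun_ae hxv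
    have hv' : ∀ t ∈ Set.Ioo a b, v t = ∫ s in a..t, μ⁻¹ * (v s - h s) := fun t ht => by
      refine intervalIntegral.integral_congr_ae_restrict ?_
      rw [Set.uIoc_of_le ht.1.le]
      exact ae_restrict_of_ae_restrict_of_subset
        (show Set.Ioc a t ⊆ Set.Ioo a b from fun s hs => ⟨hs.1, hs.2.trans_lt ht.2⟩) hxv
    have hder : ∀ t ∈ Set.Ioo a b, HasDerivAt v (μ⁻¹ * (v t - h t)) t := fun t ht => by
      have h1 := intervalIntegral.integral_hasDerivAt_right
        (intervalIntegrable_left hab hwi (Set.Ioo_subset_Icc_self ht))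
        (hwc.stronglyMeasurableAtFilter isOpen_Ioo t ht)
        (hwc.continuousAt (isOpen_Ioo.mem_nhds ht))
      refine h1.congr_of_eventuallyEq ?_
      filter_upwards [isOpen_Ioo.mem_nhds ht] with s hs using hv' s hs
    -- `e^(-t/μ)` is the integrating factor; `e^(t/μ)` undoes it
    have hE : ∀ (k : ℂ) (t : ℝ), AnalyticAt ℝ (fun s : ℝ => Complex.exp (k * s)) t := fun k t => by
      have h1 : AnalyticAt ℝ Complex.exp (k * t) :=
        analyticAt_cexp.restrictScalars
      have h2 : AnalyticAt ℝ (fun s : ℝ => k * (s : ℂ)) t :=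
        analyticAt_const.mul (Complex.ofRealCLM.analyticAt t)
      exact h1.comp_of_eq h2 rfl
    have hEd : ∀ (k : ℂ) (t : ℝ),
        HasDerivAt (fun s : ℝ => Complex.exp (k * s)) (Complex.exp (k * t) * k) t := fun k t => by
      have := ((Complex.ofRealCLM.hasDerivAt (x := t)).const_mul k).cexp
      simpa using this
    have hva : AnalyticOnNhd ℝ v (Set.Ioo a b) := fun t ht => by
      have hA : AnalyticAt ℝ (fun s : ℝ => Complex.exp (-μ⁻¹ * s) * v s) t := by
        refine AnalyticAt.of_eventually_hasDerivAt
          (g := fun s => Complex.exp (-μ⁻¹ * s) * (-μ⁻¹ * h s))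
          ((hE _ t).mul (analyticAt_const.mul (hh t ht))) ?_
        filter_upwards [isOpen_Ioo.mem_nhds ht] with s hs
        refine ((hEd (-μ⁻¹) s).mul (hder s hs)).congr_deriv ?_
        ring
      refine ((hE μ⁻¹ t).mul hA).congr (.of_forall fun s => ?_)
      simp only [Pi.mul_apply]
      rw [← mul_assoc, ← Complex.exp_add]
      simp
    exact ⟨_, fun t ht => analyticAt_const.mul ((hva t ht).sub (hh t ht)), hxv⟩

/-- The linear functional on polynomials with `X^i ↦ s i`. For `s i = I_a^[i] x t` its value at `P`
is `(P(I_a) x)(t)`. -/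
noncomputable def seqFunctional (s : ℕ → ℂ) : Polynomial ℂ →ₗ[ℂ] ℂ :=
  Polynomial.lsum fun i => LinearMap.mulRight ℂ (s i)

theorem seqFunctional_monomial (s : ℕ → ℂ) (i : ℕ) (c : ℂ) :
    seqFunctional s (Polynomial.monomial i c) = c * s i := by
  simp [seqFunctional, Polynomial.lsum_apply]

/-- The pointwise form of `((X - μ) Q)(I_a) x = Q(I_a) ((I_a - μ) x)`. -/
theorem seqFunctional_factor (s : ℕ → ℂ) (μ : ℂ) (Q : Polynomial ℂ) :
    seqFunctional s ((Polynomial.X - Polynomial.C μ) * Q) =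
      seqFunctional (fun i => s (i + 1) - μ * s i) Q := by
  induction Q using Polynomial.induction_on' with
  | add p q hp hq => rw [mul_add, map_add, map_add, hp, hq]
  | monomial i c =>
    rw [sub_mul, Polynomial.X_mul_monomial, Polynomial.C_mul_monomial, map_sub]
    simp only [seqFunctional_monomial]
    ring

/-- The complex version of the theorem for an arbitrary nonzero polynomial in `I_a`, by induction on
its degree `m`. -/
theorem analytic_of_polynomial (hab : a < b) {h : ℝ → ℂ}
    (hh : AnalyticOnNhd ℝ h (Set.Ioo a b)) (m : ℕ) :
    ∀ (P : Polynomial ℂ), P.natDegree = m → P ≠ 0 → ∀ x : ℝ → ℂ, IntegrableOn x (Set.Ioo a b) →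
    (∀ᵐ t ∂(volume.restrict (Set.Ioo a b)),
      seqFunctional (fun i => (complexIndefInt a)^[i] x t) P = h t) →
    ∃ y : ℝ → ℂ, AnalyticOnNhd ℝ y (Set.Ioo a b) ∧
      ∀ᵐ t ∂(volume.restrict (Set.Ioo a b)), x t = y t := by
  induction m with
  | zero =>
    intro P hP hP0 x hx heq
    obtain ⟨c, rfl⟩ := Polynomial.natDegree_eq_zero.1 hP
    have hc : c ≠ 0 := by rintro rfl; simp at hP0
    refine ⟨fun t => c⁻¹ * h t, fun t ht => analyticAt_const.mul (hh t ht), ?_⟩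
    filter_upwards [heq] with t ht
    rw [← Polynomial.monomial_zero_left, seqFunctional_monomial] at ht
    rw [← ht]
    simp [hc]
  | succ m ih =>
    intro P hP hP0 x hx heq
    obtain ⟨μ, hμ⟩ := IsAlgClosed.exists_root P (by
      rw [Polynomial.degree_eq_natDegree hP0, hP]; exact_mod_cast Nat.succ_ne_zero m)
    obtain ⟨Q, rfl⟩ := Polynomial.dvd_iff_isRoot.2 hμ
    have hQ0 : Q ≠ 0 := right_ne_zero_of_mul hP0
    have hQ : Q.natDegree = m := by
      rw [Polynomial.natDegree_mul (left_ne_zero_of_mul hP0) hQ0,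
        Polynomial.natDegree_X_sub_C] at hP
      omega
    obtain ⟨z, hz, hxz⟩ := ih Q hQ hQ0 (fun s => complexIndefInt a x s - μ * x s)
      ((integrableOn_complexIndefInt hab hx).sub (hx.const_mul μ)) (by
        filter_upwards [heq, ae_restrict_mem measurableSet_Ioo] with t ht htI
        rw [← ht, seqFunctional_factor]
        congr 2
        funext i
        exact iterate_sub_smul hab hx μ i t (Set.Ioo_subset_Icc_self htI))
    exact analytic_of_first_order hab hx hz μ hxz

end

theorem complexIndefInt_iterate_ofReal (a : ℝ) (x : ℝ → ℝ) (i : ℕ) :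
    (complexIndefInt a)^[i] (fun t => (x t : ℂ)) = fun t => (((indefInt a)^[i] x t : ℝ) : ℂ) := by
  induction i with
  | zero => rfl
  | succ i ih =>
    rw [Function.iterate_succ_apply', ih]
    funext t
    rw [Function.iterate_succ_apply']
    exact intervalIntegral.integral_ofReal

/-- If `x` is integrable on `(a,b)`, `f` is real analytic on a neighbourhood of
each point of `(a,b)`, `c 0 ≠ 0`, and `Σ_{j=0}^{n} c_j · (I_a^[n−j] x)(t) = f(t)` a.e. on
`(a,b)`, then `x` agrees a.e. on `(a,b)` with a function real analytic on a neighbourhood of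
each point of `(a,b)`. -/
theorem analytic_solutions_of_integral_equation
    (a b : ℝ) (hab : a < b) (n : ℕ) (c : Fin (n + 1) → ℝ) (hc : c 0 ≠ 0)
    (x f : ℝ → ℝ) (hx : IntegrableOn x (Set.Ioo a b))
    (hf : AnalyticOnNhd ℝ f (Set.Ioo a b))
    (heq : ∀ᵐ t ∂(volume.restrict (Set.Ioo a b)),
      ∑ j : Fin (n + 1), c j * (indefInt a)^[n - (j : ℕ)] x t = f t) :
    ∃ y : ℝ → ℝ, AnalyticOnNhd ℝ y (Set.Ioo a b) ∧
      ∀ᵐ t ∂(volume.restrict (Set.Ioo a b)), x t = y t := by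
  let P : Polynomial ℂ := ∑ j : Fin (n + 1), Polynomial.monomial (n - (j : ℕ)) (c j : ℂ)
  have hP0 : P ≠ 0 := fun h => by
    have h1 : P.coeff n = c 0 := by
      simp only [P, Polynomial.finsetSum_coeff, Polynomial.coeff_monomial]
      rw [Finset.sum_eq_single 0]
      · simp
      · intro j _ hj
        have : (j : ℕ) ≠ 0 := fun h => hj (Fin.ext h)
        rw [if_neg (by omega)]
      · simp
    rw [h, Polynomial.coeff_zero] at h1
    exact hc (by exact_mod_cast h1.symm)
  have hfC : AnalyticOnNhd ℝ (fun t => (f t : ℂ)) (Set.Ioo a b) := fun t ht =>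
    (Complex.ofRealCLM.analyticAt (f t)).comp (hf t ht)
  obtain ⟨y, hy, hxy⟩ := analytic_of_polynomial hab hfC P.natDegree P rfl hP0
    (fun t => (x t : ℂ)) hx.ofReal (by
      filter_upwards [heq] with t ht
      simp only [P, map_sum, seqFunctional_monomial, complexIndefInt_iterate_ofReal]
      exact_mod_cast ht)
  refine ⟨fun t => (y t).re, fun t ht => (Complex.reCLM.analyticAt (y t)).comp (hy t ht), ?_⟩
  filter_upwards [hxy] with t ht
  rw [← ht, Complex.ofReal_re]
end

section
/- Let a < b be real numbers, n ∈ ℕ, c : Fin (n+1) → ℝ with c 0 ≠ 0, and f : ℝ → ℝ. If x₁ and x₂ are both integrable on (a,b) and for almost every t ∈ (a,b) both satisfy Σ_{j=0}^{n} c_j · (I_a^[n−j] x_i)(t) = f(t) (i = 1,2), then x₁ = x₂ almost everywhere on (a,b). -/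
/-!
By linearity it suffices to show that `x = x₁ - x₂` (cut off outside `(a,b)`, so that it is
integrable on every bounded interval) vanishes a.e. on `(a,b)` when `∑ dᵢ I_a^[i] x = 0` a.e. there
and some `dₙ ≠ 0`.

* If `d₀ ≠ 0`, this is a Volterra equation of the second kind: it gives `|x t| ≤ C ∫_a^t |x|` a.e.,
  and Grönwall's inequality forces `x = 0` a.e. (`ae_zero_of_volterra`).
* If `d₀ = 0`, the equation is one with fewer terms for `I_a x`, so `I_a x = 0` a.e. by induction on
  `n`, and `I_a` is injective up to null sets (`ae_zero_of_indefInt_ae_zero`).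
-/

open MeasureTheory

/-- `g` is integrable on every bounded interval. On this class `indefInt a` is linear and maps the
class to itself. -/
def LocInt (g : ℝ → ℝ) : Prop := ∀ s t : ℝ, IntervalIntegrable g volume s t

lemma LocInt.continuous_indefInt {g : ℝ → ℝ} (hg : LocInt g) (a : ℝ) :
    Continuous (indefInt a g) :=
  intervalIntegral.continuous_primitive hg a

lemma LocInt.indefInt {g : ℝ → ℝ} (hg : LocInt g) (a : ℝ) : LocInt (indefInt a g) :=
  fun _ _ => (hg.continuous_indefInt a).intervalIntegrable _ _

lemma LocInt.iterate {g : ℝ → ℝ} (hg : LocInt g) (a : ℝ) (m : ℕ) :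
    LocInt ((_root_.indefInt a)^[m] g) := by
  induction m with
  | zero => exact hg
  | succ m ih => rw [Function.iterate_succ_apply']; exact ih.indefInt a

lemma LocInt.indicator {g : ℝ → ℝ} {a b : ℝ} (hg : IntegrableOn g (Set.Ioo a b)) :
    LocInt ((Set.Ioo a b).indicator g) :=
  fun _ _ => ((integrable_indicator_iff measurableSet_Ioo).2 hg).intervalIntegrable

lemma iterate_sub {g h : ℝ → ℝ} (hg : LocInt g) (hh : LocInt h) (a : ℝ) (m : ℕ) :
    (indefInt a)^[m] (g - h) = (indefInt a)^[m] g - (indefInt a)^[m] h := by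
  induction m with
  | zero => rfl
  | succ m ih =>
    simp only [Function.iterate_succ_apply', ih]
    funext t
    exact intervalIntegral.integral_sub (hg.iterate a m a t) (hh.iterate a m a t)

lemma iterate_eqOn {g h : ℝ → ℝ} {a b : ℝ} (hgh : Set.EqOn g h (Set.Ioo a b)) (m : ℕ) :
    Set.EqOn ((indefInt a)^[m] g) ((indefInt a)^[m] h) (Set.Ioo a b) := by
  induction m with
  | zero => exact hgh
  | succ m ih =>
    simp only [Function.iterate_succ_apply']
    intro t ht
    refine intervalIntegral.integral_congr_ae (Filter.Eventually.of_forall fun s hs => ih ?_)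
    rw [Set.uIoc_of_le ht.1.le] at hs
    exact ⟨hs.1, hs.2.trans_lt ht.2⟩

lemma integral_abs_mono {y : ℝ → ℝ} (hy : LocInt y) {a s t : ℝ} (hs : a ≤ s) (hst : s ≤ t) :
    ∫ r in a..s, |y r| ≤ ∫ r in a..t, |y r| :=
  intervalIntegral.integral_mono_interval le_rfl hs hst
    (Filter.Eventually.of_forall fun _ => abs_nonneg _) (hy a t).abs

/-- Crude bound on iterated integrals: the innermost integration contributes `∫_a^t |y|`, each
further one at most the factor `b - a`. -/
lemma abs_iterate_le {y : ℝ → ℝ} (hy : LocInt y) {a b : ℝ} (m : ℕ) :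
    ∀ t, a ≤ t → t ≤ b →
      |(indefInt a)^[m + 1] y t| ≤ (b - a) ^ m * ∫ r in a..t, |y r| := by
  induction m with
  | zero =>
    intro t ht _
    simpa [indefInt] using intervalIntegral.abs_integral_le_integral_abs (f := y) (μ := volume) ht
  | succ m ih =>
    intro t ht htb
    rw [Function.iterate_succ_apply']
    have hba : 0 ≤ b - a := by linarith
    have hu : 0 ≤ ∫ r in a..t, |y r| :=
      intervalIntegral.integral_nonneg ht fun _ _ => abs_nonneg _
    have key : ‖∫ s in a..t, (indefInt a)^[m + 1] y s‖ ≤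
        ((b - a) ^ m * ∫ r in a..t, |y r|) * |t - a| := by
      refine intervalIntegral.norm_integral_le_of_norm_le_const fun s hs => ?_
      rw [Set.uIoc_of_le ht] at hs
      exact (ih s hs.1.le (hs.2.trans htb)).trans
        (mul_le_mul_of_nonneg_left (integral_abs_mono hy hs.1.le hs.2) (pow_nonneg hba m))
    calc _ ≤ _ := key
      _ ≤ ((b - a) ^ m * ∫ r in a..t, |y r|) * (b - a) := by
          rw [abs_of_nonneg (by linarith)]
          gcongr
      _ = _ := by ring

/-- Integral form of Grönwall's inequality with zero initial value, for merely integrable `y`. -/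
lemma ae_zero_of_abs_le_integral {y : ℝ → ℝ} (hy : LocInt y) {a b C : ℝ}
    (hC : 0 ≤ C)
    (h : ∀ᵐ t ∂(volume.restrict (Set.Ioo a b)), |y t| ≤ C * ∫ r in a..t, |y r|) :
    ∀ᵐ t ∂(volume.restrict (Set.Ioo a b)), y t = 0 := by
  have hya : LocInt fun t => |y t| := fun s t => (hy s t).abs
  set u : ℝ → ℝ := fun t => ∫ r in a..t, |y r| with hu
  have huc : Continuous u := hya.continuous_indefInt a
  -- `u` need not be differentiable everywhere, so the differential Grönwall inequality is
  -- applied to its primitive `v`.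
  set v : ℝ → ℝ := fun t => ∫ r in a..t, u r with hv
  have hvd : ∀ t, HasDerivAt v (u t) t := fun t =>
    intervalIntegral.integral_hasDerivAt_right (huc.intervalIntegrable _ _)
      (huc.stronglyMeasurableAtFilter _ _) huc.continuousAt
  have hu0 : ∀ t, a ≤ t → 0 ≤ u t := fun t ht =>
    intervalIntegral.integral_nonneg ht fun _ _ => abs_nonneg _
  have hv0 : ∀ t, a ≤ t → 0 ≤ v t := fun t ht =>
    intervalIntegral.integral_nonneg ht fun s hs => hu0 s hs.1
  have huv : ∀ t, a ≤ t → t ≤ b → u t ≤ C * v t := by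
    intro t ht htb
    rw [hv, ← intervalIntegral.integral_const_mul]
    refine intervalIntegral.integral_mono_ae_restrict ht (hya a t)
      ((huc.const_mul C).intervalIntegrable _ _) ?_
    rw [← Measure.restrict_congr_set (Ioo_ae_eq_Icc (μ := volume) (a := a) (b := t))]
    exact ae_restrict_of_ae_restrict_of_subset (Set.Ioo_subset_Ioo_right htb) h
  have hvz : ∀ t ∈ Set.Icc a b, ‖v t‖ ≤ gronwallBound 0 C 0 (t - a) := by
    refine norm_le_gronwallBound_of_norm_deriv_right_le (f' := u)
      (fun t _ => (hvd t).continuousAt.continuousWithinAt)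
      (fun t _ => (hvd t).hasDerivWithinAt) (by simp [hv]) ?_
    intro t ht
    rw [Real.norm_of_nonneg (hu0 t ht.1), Real.norm_of_nonneg (hv0 t ht.1), add_zero]
    exact huv t ht.1 ht.2.le
  filter_upwards [h, ae_restrict_mem measurableSet_Ioo] with t ht htm
  have h1 := hvz t ⟨htm.1.le, htm.2.le⟩
  rw [gronwallBound_ε0_δ0] at h1
  have h2 : v t = 0 := norm_le_zero_iff.1 h1
  have h3 := huv t htm.1.le htm.2.le
  rw [h2, mul_zero] at h3
  have h4 : |y t| ≤ 0 := ht.trans (mul_nonpos_of_nonneg_of_nonpos hC h3)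
  exact abs_nonpos_iff.1 h4

/-- Homogeneous Volterra equations of the second kind have only the trivial solution. -/
lemma ae_zero_of_volterra {y : ℝ → ℝ} (hy : LocInt y) {a b : ℝ} (hab : a < b) (n : ℕ)
    (d : ℕ → ℝ) (hd : d 0 ≠ 0)
    (h : ∀ᵐ t ∂(volume.restrict (Set.Ioo a b)),
      ∑ i ∈ Finset.range (n + 1), d i * (indefInt a)^[i] y t = 0) :
    ∀ᵐ t ∂(volume.restrict (Set.Ioo a b)), y t = 0 := by
  have hba : 0 ≤ b - a := by linarith
  refine ae_zero_of_abs_le_integral hy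
    (C := |d 0|⁻¹ * ∑ i ∈ Finset.range n, |d (i + 1)| * (b - a) ^ i)
    (by positivity) ?_
  filter_upwards [h, ae_restrict_mem measurableSet_Ioo] with t ht htm
  rw [Finset.sum_range_succ'] at ht
  have h1 : d 0 * y t = -∑ i ∈ Finset.range n, d (i + 1) * (indefInt a)^[i + 1] y t := by
    simp only [Function.iterate_zero, id_eq] at ht
    linarith
  have h2 : |d 0| * |y t| ≤
      (∑ i ∈ Finset.range n, |d (i + 1)| * (b - a) ^ i) * ∫ r in a..t, |y r| := by
    rw [← abs_mul, h1, abs_neg, Finset.sum_mul]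
    refine (Finset.abs_sum_le_sum_abs _ _).trans (Finset.sum_le_sum fun i _ => ?_)
    rw [abs_mul, mul_assoc]
    exact mul_le_mul_of_nonneg_left (abs_iterate_le hy i t htm.1.le htm.2.le) (abs_nonneg _)
  rw [mul_assoc]
  exact (le_inv_mul_iff₀ (abs_pos.2 hd)).2 h2

lemma ae_zero_of_indefInt_ae_zero {y : ℝ → ℝ} (hy : LocInt y) {a b : ℝ}
    (h : ∀ᵐ t ∂(volume.restrict (Set.Ioo a b)), indefInt a y t = 0) :
    ∀ᵐ t ∂(volume.restrict (Set.Ioo a b)), y t = 0 := by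
  have hz : Set.EqOn (indefInt a y) 0 (Set.Ioo a b) :=
    Measure.eqOn_open_of_ae_eq h isOpen_Ioo (hy.continuous_indefInt a).continuousOn
      continuousOn_const
  -- Lebesgue differentiation: a.e. the primitive has derivative `y t`, and it is locally zero.
  filter_upwards [ae_restrict_of_ae (hy a b).ae_hasDerivAt_integral,
    ae_restrict_mem measurableSet_Ioo] with t ht htm
  have hab : a ≤ b := (htm.1.trans htm.2).le
  have h0 : HasDerivAt (indefInt a y) 0 t :=
    (hasDerivAt_const t (0 : ℝ)).congr_of_eventuallyEq
      (hz.eventuallyEq_of_mem (isOpen_Ioo.mem_nhds htm))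
  exact (ht (Set.uIcc_of_le hab ▸ Set.Ioo_subset_Icc_self htm) a Set.left_mem_uIcc).unique h0

lemma ae_zero_of_sum {n : ℕ} {a b : ℝ} (hab : a < b) :
    ∀ (d : ℕ → ℝ) (y : ℝ → ℝ), LocInt y → d n ≠ 0 →
      (∀ᵐ t ∂(volume.restrict (Set.Ioo a b)),
        ∑ i ∈ Finset.range (n + 1), d i * (indefInt a)^[i] y t = 0) →
      ∀ᵐ t ∂(volume.restrict (Set.Ioo a b)), y t = 0 := by
  induction n with
  | zero => exact fun d y hy hd h => ae_zero_of_volterra hy hab 0 d hd h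
  | succ n ih =>
    intro d y hy hd h
    by_cases h0 : d 0 = 0
    · refine ae_zero_of_indefInt_ae_zero hy (ih (fun i => d (i + 1)) _ (hy.indefInt a) hd ?_)
      filter_upwards [h] with t ht
      rw [Finset.sum_range_succ', h0, zero_mul, add_zero] at ht
      simpa only [Function.iterate_succ_apply] using ht
    · exact ae_zero_of_volterra hy hab (n + 1) d h0 h



/-- If `x₁` and `x₂` are integrable on `(a,b)`, `c 0 ≠ 0`, and both satisfy
`Σ_{j=0}^{n} c_j · (I_a^[n−j] x_i)(t) = f(t)` a.e. on `(a,b)`, then `x₁ = x₂` a.e. on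
`(a,b)`. -/
theorem integral_equation_uniqueness
    (a b : ℝ) (hab : a < b) (n : ℕ) (c : Fin (n + 1) → ℝ) (hc : c 0 ≠ 0) (f : ℝ → ℝ)
    (x₁ x₂ : ℝ → ℝ)
    (hx₁ : IntegrableOn x₁ (Set.Ioo a b)) (hx₂ : IntegrableOn x₂ (Set.Ioo a b))
    (heq₁ : ∀ᵐ t ∂(volume.restrict (Set.Ioo a b)),
      ∑ j : Fin (n + 1), c j * (indefInt a)^[n - (j : ℕ)] x₁ t = f t)
    (heq₂ : ∀ᵐ t ∂(volume.restrict (Set.Ioo a b)),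
      ∑ j : Fin (n + 1), c j * (indefInt a)^[n - (j : ℕ)] x₂ t = f t) :
    ∀ᵐ t ∂(volume.restrict (Set.Ioo a b)), x₁ t = x₂ t := by
  have hX₁ := LocInt.indicator hx₁
  have hX₂ := LocInt.indicator hx₂
  have hE : ∀ x : ℝ → ℝ, Set.EqOn ((Set.Ioo a b).indicator x) x (Set.Ioo a b) :=
    fun x t ht => Set.indicator_of_mem ht x
  -- `d i` is the coefficient of the `i`-th iterate, so `d n = c 0`.
  have key := ae_zero_of_sum (n := n) hab (fun i => c (Fin.ofNat (n + 1) (n - i)))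
    ((Set.Ioo a b).indicator x₁ - (Set.Ioo a b).indicator x₂)
    (fun s t => (hX₁ s t).sub (hX₂ s t)) (by simpa using hc) (by
      filter_upwards [heq₁, heq₂, ae_restrict_mem measurableSet_Ioo] with t h₁ h₂ ht
      rw [← Finset.sum_range_reflect, ← Fin.sum_univ_eq_sum_range
        (fun j => c (Fin.ofNat (n + 1) (n - (n + 1 - 1 - j))) * (indefInt a)^[n + 1 - 1 - j] _ t),
        ← sub_eq_zero.2 (h₁.trans h₂.symm), ← Finset.sum_sub_distrib]
      refine Finset.sum_congr rfl fun j _ => ?_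
      have hj : Fin.ofNat (n + 1) (n - (n + 1 - 1 - (j : ℕ))) = j := by
        ext
        have := j.2
        rw [Fin.val_ofNat, Nat.mod_eq_of_lt (by omega)]
        omega
      rw [hj, iterate_sub hX₁ hX₂, Nat.add_sub_cancel, Pi.sub_apply,
        iterate_eqOn (hE x₁) _ ht, iterate_eqOn (hE x₂) _ ht, mul_sub])
  filter_upwards [key, ae_restrict_mem measurableSet_Ioo] with t h ht
  rw [Pi.sub_apply, hE x₁ ht, hE x₂ ht] at h
  exact sub_eq_zero.1 h
end

section
/- Let a < b be real numbers, l ≥ 1, let α : Fin l → ℚ be pairwise distinct nonnegative rational numbers, and let c : Fin l → ℂ be coefficients that are not all zero. If x₁ and x₂ are both integrable on (a,b) and for almost every t ∈ (a,b) one has Σ_{i} c_i · (I_{a+}^{α_i} x₁)(t) = Σ_{i} c_i · (I_{a+}^{α_i} x₂)(t), then x₁ = x₂ almost everywhere on (a,b). In other words, a linear fractional-order integral equation with constant coefficients and rational orders has at most one solution in L¹(a,b). -/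
/-!
By linearity it suffices to treat the homogeneous equation `∑ cᵢ I^{αᵢ} x = 0` on `(a,b)`. Put
`u(s) = e^{-rs} x(s)` on `(a,b)` and `u = 0` elsewhere. Then `e^{-rt} (I^β x)(t)` is the convolution
of `u` with the damped kernel `t₊^{β-1} e^{-rt} / Γ(β)`, which is integrable on the whole line with
integral `r^{-β}`, so everything takes place in the convolution algebra `L¹(ℝ)`.

Let `m = α_{i₀}` be the lowest order with a nonzero coefficient and `N = ⌊m⌋ + 1`. Convolving the
equation with the kernel of order `N - m` and using the semigroup law of the kernels (`cv_rlKer`,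
Euler's Beta integral) shows that the integral of order `N` of `y = ∑ cᵢ I^{αᵢ - m} u` vanishes on
`(-∞, b)`. Integrals of positive integer order are injective by Lebesgue differentiation
(`eq_zero_of_cv_nat`), so `y = 0` there. This is a Volterra equation of the second kind,
`c_{i₀} u = -∑_{i ≠ i₀} cᵢ I^{αᵢ - m} u`, and since `I^β` has `L¹` norm at most `r^{-β}`
(`integral_norm_damped_le`), the right-hand side has norm less than `|c_{i₀}| ‖u‖` for large `r`
unless `u = 0`.
-/

open MeasureTheory

/-- The left Riemann–Liouville fractional integral of order `α ≥ 0` from `a`: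
`(I_{a+}^α x)(t) = (1/Γ(α)) ∫_a^t (t−s)^(α−1) x(s) ds` for `α > 0`, and the identity for
`α = 0`. -/
noncomputable def rlInt (a : ℝ) (α : ℝ) (x : ℝ → ℂ) : ℝ → ℂ :=
  if α = 0 then x
  else fun t => (Real.Gamma α)⁻¹ • ∫ s in a..t, ((t - s) ^ (α - 1) : ℝ) • x s

open Set Filter Topology

/-! ### Damped kernels and convolution -/

/-- The exponentially damped Riemann–Liouville kernel `t₊^(β-1) e^(-rt) / Γ(β)`. -/
noncomputable def rlKerReal (r β t : ℝ) : ℝ :=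
  (Ioi (0 : ℝ)).indicator (fun t => (Real.Gamma β)⁻¹ * (t ^ (β - 1) * Real.exp (-(r * t)))) t

/-- The damped kernel `rlKerReal`, with complex values. -/
noncomputable def rlKer (r β : ℝ) (t : ℝ) : ℂ := (rlKerReal r β t : ℂ)

/-- Convolution of complex-valued functions on the line. -/
noncomputable def cv (f g : ℝ → ℂ) : ℝ → ℂ :=
  convolution f g (ContinuousLinearMap.mul ℝ ℂ) volume

/-- The damped fractional integral of order `β ≥ 0`, based at `-∞`: convolution with `rlKer r β`
for `β ≠ 0`, and the identity for `β = 0`. -/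
noncomputable def damped (r β : ℝ) (u : ℝ → ℂ) : ℝ → ℂ :=
  if β = 0 then u else cv (rlKer r β) u

lemma rlKerReal_nonneg {r β : ℝ} (hβ : 0 < β) (t : ℝ) : 0 ≤ rlKerReal r β t := by
  unfold rlKerReal
  apply indicator_nonneg
  intro t ht
  have : (0 : ℝ) < t := ht
  have := Real.Gamma_pos_of_pos hβ
  positivity

lemma rlKerReal_of_nonpos {r β t : ℝ} (ht : t ≤ 0) : rlKerReal r β t = 0 := by
  simp [rlKerReal, ht]

lemma integral_rlKerReal {r β : ℝ} (hr : 0 < r) (hβ : 0 < β) :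
    ∫ t, rlKerReal r β t = (1 / r) ^ β := by
  unfold rlKerReal
  rw [integral_indicator measurableSet_Ioi, integral_const_mul,
    Real.integral_rpow_mul_exp_neg_mul_Ioi hβ hr]
  have := (Real.Gamma_pos_of_pos hβ).ne'
  field_simp

lemma integrable_rlKerReal {r β : ℝ} (hr : 0 < r) (hβ : 0 < β) :
    Integrable (rlKerReal r β) := by
  apply Integrable.of_integral_ne_zero
  rw [integral_rlKerReal hr hβ]
  positivity

lemma integrable_rlKer {r β : ℝ} (hr : 0 < r) (hβ : 0 < β) : Integrable (rlKer r β) :=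
  (integrable_rlKerReal hr hβ).ofReal

lemma cv_apply (f g : ℝ → ℂ) (t : ℝ) : cv f g t = ∫ s, f s * g (t - s) := rfl

lemma cv_apply_swap (f g : ℝ → ℂ) (t : ℝ) : cv f g t = ∫ s, f (t - s) * g s := by
  unfold cv
  rw [convolution_eq_swap]
  rfl

lemma integrable_cv {f g : ℝ → ℂ} (hf : Integrable f) (hg : Integrable g) :
    Integrable (cv f g) :=
  hf.integrable_convolution _ hg

lemma ae_integrable_cv {f g : ℝ → ℂ} (hf : Integrable f) (hg : Integrable g) :
    ∀ᵐ t, Integrable (fun s => f s * g (t - s)) :=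
  hf.ae_convolution_exists (ContinuousLinearMap.mul ℝ ℂ) hg

lemma cv_assoc {f g h : ℝ → ℂ} (hf : Integrable f) (hg : Integrable g) (hh : Integrable h) :
    cv (cv f g) h =ᵐ[volume] cv f (cv g h) := by
  have h1 := hf.norm.ae_convolution_exists (ContinuousLinearMap.mul ℝ ℝ)
    (hg.norm.integrable_convolution (ContinuousLinearMap.mul ℝ ℝ) hh.norm)
  filter_upwards [h1] with t ht
  exact convolution_assoc _ _ _ _ (fun x y z => mul_assoc x y z) hf.1 hg.1 hh.1
    (hf.ae_convolution_exists _ hg) (hg.norm.ae_convolution_exists _ hh.norm) ht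

/-! ### Semigroup law and causality -/

/-- The semigroup property of the kernels, which is Euler's Beta integral. -/
lemma cv_rlKer {r β γ : ℝ} (hβ : 0 < β) (hγ : 0 < γ) :
    cv (rlKer r β) (rlKer r γ) = rlKer r (β + γ) := by
  funext t
  rw [cv_apply]
  rcases le_or_gt t 0 with ht | ht
  · rw [rlKer, rlKerReal_of_nonpos ht]
    have : ∀ s, rlKer r β s * rlKer r γ (t - s) = 0 := by
      intro s
      rcases le_or_gt s 0 with hs | hs
      · simp [rlKer, rlKerReal_of_nonpos hs]
      · simp [rlKer, rlKerReal_of_nonpos (show t - s ≤ 0 by linarith)]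
    simp [this]
  · have h1 : ∀ s, rlKer r β s * rlKer r γ (t - s) = (Ioo 0 t).indicator (fun s : ℝ =>
        (((Real.Gamma β)⁻¹ * (Real.Gamma γ)⁻¹ * Real.exp (-(r * t)) : ℝ) : ℂ) *
          ((s : ℂ) ^ ((β : ℂ) - 1) * ((t : ℂ) - s) ^ ((γ : ℂ) - 1))) s := by
      intro s
      by_cases hs : s ∈ Ioo 0 t
      · rw [indicator_of_mem hs]
        have hs0 : 0 < s := hs.1
        have hs1 : 0 < t - s := sub_pos.2 hs.2
        have e1 : (s : ℂ) ^ ((β : ℂ) - 1) = ((s ^ (β - 1) : ℝ) : ℂ) := by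
          rw [Complex.ofReal_cpow hs0.le]; simp
        have e2 : ((t : ℂ) - s) ^ ((γ : ℂ) - 1) = (((t - s) ^ (γ - 1) : ℝ) : ℂ) := by
          rw [Complex.ofReal_cpow hs1.le]; simp
        have e3 : Real.exp (-(r * t)) = Real.exp (-(r * s)) * Real.exp (-(r * (t - s))) := by
          rw [← Real.exp_add]; congr 1; ring
        rw [e1, e2, e3, rlKer, rlKer, rlKerReal, rlKerReal, indicator_of_mem (mem_Ioi.2 hs0),
          indicator_of_mem (mem_Ioi.2 hs1)]
        push_cast
        ring
      · rw [indicator_of_notMem hs]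
        rcases le_or_gt s 0 with hs' | hs'
        · simp [rlKer, rlKerReal_of_nonpos hs']
        · have : t - s ≤ 0 := by
            by_contra hh
            exact hs ⟨hs', by linarith⟩
          simp [rlKer, rlKerReal_of_nonpos this]
    simp_rw [h1]
    rw [integral_indicator measurableSet_Ioo, ← integral_Ioc_eq_integral_Ioo,
      ← intervalIntegral.integral_of_le ht.le, intervalIntegral.integral_const_mul,
      Complex.betaIntegral_scaled _ _ ht]
    have hB := Complex.Gamma_mul_Gamma_eq_betaIntegral (s := β) (t := γ) (by simpa) (by simpa)
    rw [Complex.Gamma_ofReal, Complex.Gamma_ofReal, ← Complex.ofReal_add,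
      Complex.Gamma_ofReal] at hB
    have g1 : (Real.Gamma β : ℂ) ≠ 0 := by exact_mod_cast (Real.Gamma_pos_of_pos hβ).ne'
    have g2 : (Real.Gamma γ : ℂ) ≠ 0 := by exact_mod_cast (Real.Gamma_pos_of_pos hγ).ne'
    have g3 : (Real.Gamma (β + γ) : ℂ) ≠ 0 := by
      exact_mod_cast (Real.Gamma_pos_of_pos (add_pos hβ hγ)).ne'
    have hB' : Complex.betaIntegral β γ =
        (Real.Gamma β : ℂ) * Real.Gamma γ / Real.Gamma (β + γ) := by
      rw [hB]; field_simp
    have e4 : (t : ℂ) ^ ((β : ℂ) + γ - 1) = ((t ^ (β + γ - 1) : ℝ) : ℂ) := by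
      rw [Complex.ofReal_cpow ht.le]; simp
    rw [hB', e4, rlKer, rlKerReal, indicator_of_mem (mem_Ioi.2 ht)]
    push_cast
    field_simp

lemma integrable_damped {r β : ℝ} (hr : 0 < r) (hβ : 0 ≤ β) {u : ℝ → ℂ} (hu : Integrable u) :
    Integrable (damped r β u) := by
  unfold damped
  split_ifs with h
  · exact hu
  · exact integrable_cv (integrable_rlKer hr (lt_of_le_of_ne hβ (Ne.symm h))) hu

lemma cv_damped {r β γ : ℝ} (hr : 0 < r) (hβ : 0 ≤ β) (hγ : 0 < γ) {u : ℝ → ℂ}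
    (hu : Integrable u) :
    cv (rlKer r γ) (damped r β u) =ᵐ[volume] cv (rlKer r (γ + β)) u := by
  unfold damped
  split_ifs with h
  · simp [h]
  · have hβ' : 0 < β := lt_of_le_of_ne hβ (Ne.symm h)
    rw [← cv_rlKer hγ hβ']
    exact (cv_assoc (integrable_rlKer hr hγ) (integrable_rlKer hr hβ') hu).symm

/-- Causality: the convolution with `rlKer` at `t` only depends on the past of `t`. -/
lemma cv_rlKer_eq_zero {r β b : ℝ} {f : ℝ → ℂ} (hf : ∀ᵐ s, s < b → f s = 0) {t : ℝ}
    (ht : t < b) : cv (rlKer r β) f t = 0 := by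
  rw [cv_apply_swap]
  apply integral_eq_zero_of_ae
  filter_upwards [hf] with s hs
  rcases lt_or_ge s b with h | h
  · simp [hs h]
  · simp [rlKer, rlKerReal_of_nonpos (show t - s ≤ 0 by linarith)]

lemma cv_sum {ι : Type*} (s : Finset ι) (c : ι → ℂ) {k : ℝ → ℂ} (hk : Integrable k)
    {f : ι → ℝ → ℂ} (hf : ∀ i ∈ s, Integrable (f i)) :
    ∀ᵐ t, cv k (fun t => ∑ i ∈ s, c i * f i t) t = ∑ i ∈ s, c i * cv k (f i) t := by
  have h : ∀ᵐ t, ∀ i ∈ s, Integrable (fun y => k y * f i (t - y)) := by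
    rw [eventually_all_finset]
    exact fun i hi => ae_integrable_cv hk (hf i hi)
  filter_upwards [h] with t ht
  simp only [cv_apply]
  simp_rw [Finset.mul_sum]
  rw [integral_finsetSum]
  · refine Finset.sum_congr rfl fun i _ => ?_
    rw [← integral_const_mul]
    congr 1; funext y; ring
  · intro i hi
    refine ((ht i hi).const_mul (c i)).congr (Eventually.of_forall fun y => ?_)
    simp only; ring

/-! ### Injectivity of integer-order integration -/

/-- Injectivity of the first-order integral: since `rlKer r 1` is `e^(-rt)` on the half-line, the
hypothesis says that an antiderivative of `e^(rs) y(s)` vanishes, and Lebesgue differentiation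
recovers `y`. -/
lemma eq_zero_of_cv_one {r b : ℝ} (hr : 0 < r) {y : ℝ → ℂ} (hy : Integrable y)
    (h : ∀ᵐ t, t < b → cv (rlKer r 1) y t = 0) : ∀ᵐ t, t < b → y t = 0 := by
  set f : ℝ → ℂ := fun s => ((Real.exp (r * s) : ℝ) : ℂ) * y s with hf
  have hcont : Continuous fun s : ℝ => ((Real.exp (r * s) : ℝ) : ℂ) := by fun_prop
  have hloc : LocallyIntegrable f := by
    have := hy.locallyIntegrable
    rw [← locallyIntegrableOn_univ] at this ⊢
    exact this.continuousOn_mul hcont.continuousOn isOpen_univ.isLocallyClosed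
  have hIic : ∀ t, IntegrableOn f (Iic t) := by
    intro t
    refine Integrable.mono' (hy.norm.const_mul (Real.exp (r * t))).integrableOn
      hloc.aestronglyMeasurable.restrict ?_
    filter_upwards [ae_restrict_mem measurableSet_Iic] with s hs
    rw [hf, norm_mul, Complex.norm_real, Real.norm_eq_abs, abs_of_pos (Real.exp_pos _)]
    have : s ≤ t := hs
    gcongr
  have hG : ∀ t, cv (rlKer r 1) y t = ((Real.exp (-(r * t)) : ℝ) : ℂ) * ∫ s in Iic t, f s := by
    intro t
    rw [cv_apply_swap, integral_Iic_eq_integral_Iio, ← integral_indicator measurableSet_Iio,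
      ← integral_const_mul]
    congr 1
    funext s
    by_cases hs : s < t
    · rw [indicator_of_mem (mem_Iio.2 hs), rlKer, rlKerReal,
        indicator_of_mem (mem_Ioi.2 (sub_pos.2 hs)), hf]
      have e3 : Real.exp (-(r * (t - s))) = Real.exp (-(r * t)) * Real.exp (r * s) := by
        rw [← Real.exp_add]; congr 1; ring
      rw [e3]
      simp
      ring
    · rw [indicator_of_notMem (by simpa using hs), rlKer,
        rlKerReal_of_nonpos (by linarith [not_lt.1 hs])]
      simp
  have hG0 : ∀ᵐ t, t < b → ∫ s in Iic t, f s = 0 := by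
    filter_upwards [h] with t ht htb
    have := ht htb
    rw [hG] at this
    refine (mul_eq_zero.1 this).resolve_left ?_
    exact_mod_cast (Real.exp_pos _).ne'
  obtain ⟨c, hcb, hc⟩ : ∃ c, c < b ∧ ∫ s in Iic c, f s = 0 := by
    have h0 : (∀ᵐ t ∂(volume.restrict (Iio b)), ∫ s in Iic t, f s = 0) :=
      (ae_restrict_iff' measurableSet_Iio).2 hG0
    have : NeBot (ae (volume.restrict (Iio b))) := by
      rw [ae_neBot, Ne, Measure.restrict_eq_zero]
      simp
    obtain ⟨c, hc⟩ := (h0.and (ae_restrict_mem measurableSet_Iio)).exists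
    exact ⟨c, hc.2, hc.1⟩
  have hF0 : ∀ᵐ t ∂(volume.restrict (Iio b)), (∫ s in c..t, f s) = (fun _ => (0 : ℂ)) t := by
    rw [ae_restrict_iff' measurableSet_Iio]
    filter_upwards [hG0] with t ht htb
    rw [← intervalIntegral.integral_Iic_sub_Iic (hIic c) (hIic t), hc, ht htb, sub_zero]
  have hFc : Continuous fun t => ∫ s in c..t, f s :=
    intervalIntegral.continuous_primitive
      (fun a b => (hloc.integrableOn_isCompact isCompact_uIcc).intervalIntegrable) c
  have hF := Measure.eqOn_open_of_ae_eq hF0 isOpen_Iio hFc.continuousOn continuousOn_const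
  filter_upwards [LocallyIntegrable.ae_hasDerivAt_integral hloc] with t ht htb
  have h1 := ht c
  have h2 : HasDerivAt (fun t => ∫ s in c..t, f s) 0 t :=
    (hasDerivAt_const t (0 : ℂ)).congr_of_eventuallyEq
      (hF.eventuallyEq_of_mem (Iio_mem_nhds htb))
  have h3 : f t = 0 := h1.unique h2
  refine (mul_eq_zero.1 h3).resolve_left ?_
  exact_mod_cast (Real.exp_pos _).ne'

lemma eq_zero_of_cv_nat {r b : ℝ} (hr : 0 < r) (n : ℕ) {y : ℝ → ℂ} (hy : Integrable y)
    (h : ∀ᵐ t, t < b → cv (rlKer r (n + 1)) y t = 0) : ∀ᵐ t, t < b → y t = 0 := by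
  induction n with
  | zero => exact eq_zero_of_cv_one hr hy (by simpa using h)
  | succ n ih =>
    have hn : (0 : ℝ) < n + 1 := by positivity
    apply ih
    apply eq_zero_of_cv_one hr (integrable_cv (integrable_rlKer hr hn) hy)
    filter_upwards [h, cv_assoc (integrable_rlKer hr one_pos) (integrable_rlKer hr hn) hy]
      with t ht h2 htb
    rw [← h2, cv_rlKer one_pos hn, add_comm (1 : ℝ)]
    exact_mod_cast ht htb

/-! ### Volterra equation of the second kind -/

/-- The damped fractional integral of order `β` has `L¹` operator norm at most `r^(-β)`. -/
lemma integral_norm_damped_le {r β : ℝ} (hr : 0 < r) (hβ : 0 ≤ β) {u : ℝ → ℂ}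
    (hu : Integrable u) : ∫ t, ‖damped r β u t‖ ≤ (1 / r) ^ β * ∫ t, ‖u t‖ := by
  unfold damped
  split_ifs with h
  · simp [h]
  have hβ' : 0 < β := lt_of_le_of_ne hβ (Ne.symm h)
  have hk := integrable_rlKerReal hr hβ'
  have h1 := integral_convolution (ContinuousLinearMap.mul ℝ ℝ) (μ := volume) (ν := volume)
    hk hu.norm
  rw [integral_rlKerReal hr hβ'] at h1
  simp only [ContinuousLinearMap.mul_apply'] at h1
  rw [← h1]
  apply integral_mono (integrable_cv (integrable_rlKer hr hβ') hu).norm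
    (hk.integrable_convolution _ hu.norm)
  intro t
  simp only [cv_apply, convolution_def, ContinuousLinearMap.mul_apply']
  refine (norm_integral_le_integral_norm _).trans (le_of_eq ?_)
  congr 1
  funext s
  rw [norm_mul, rlKer, Complex.norm_real, Real.norm_eq_abs, abs_of_nonneg (rlKerReal_nonneg hβ' s)]

/-- Uniqueness for the damped homogeneous equation on `(-∞, b)`, when the damping `r` is so large
that the term of lowest order `α i₀` dominates the others. -/
lemma damped_uniqueness {ι : Type*} [DecidableEq ι] (s : Finset ι) (i₀ : ι) (hi₀ : i₀ ∈ s)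
    (α : ι → ℝ) (c : ι → ℂ) {r b : ℝ} (hr : 0 < r) (h0 : 0 ≤ α i₀)
    (hmin : ∀ i ∈ s, α i₀ ≤ α i)
    (hsmall : ∑ i ∈ s.erase i₀, ‖c i‖ * (1 / r) ^ (α i - α i₀) < ‖c i₀‖)
    {u : ℝ → ℂ} (hu : Integrable u) (hub : ∀ t, b ≤ t → u t = 0)
    (heq : ∀ᵐ t, t < b → ∑ i ∈ s, c i * damped r (α i) u t = 0) : u =ᵐ[volume] 0 := by
  set m := α i₀
  set n := ⌊m⌋₊
  have hγ : 0 < (n : ℝ) + 1 - m := sub_pos.2 (Nat.lt_floor_add_one m)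
  have hn : (0 : ℝ) < (n : ℝ) + 1 := by positivity
  have hα : ∀ i ∈ s, 0 ≤ α i := fun i hi => h0.trans (hmin i hi)
  have hδ : ∀ i ∈ s, 0 ≤ α i - m := fun i hi => sub_nonneg.2 (hmin i hi)
  set y : ℝ → ℂ := fun t => ∑ i ∈ s, c i * damped r (α i - m) u t with hy
  have hyint : Integrable y := integrable_finsetSum _ fun i hi =>
    (integrable_damped hr (hδ i hi) hu).const_mul _
  -- Raising every order by `n + 1 - m` makes the lowest order the integer `n + 1`.
  have key : ∀ᵐ t, t < b → y t = 0 := by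
    apply eq_zero_of_cv_nat hr n hyint
    have A : ∀ᵐ t, ∀ i ∈ s, cv (rlKer r ((n : ℝ) + 1 - m)) (damped r (α i) u) t =
        cv (rlKer r (n + 1)) (damped r (α i - m) u) t := by
      rw [eventually_all_finset]
      intro i hi
      filter_upwards [cv_damped hr (hα i hi) hγ hu, cv_damped hr (hδ i hi) hn hu] with t h1 h2
      rw [h1, h2]
      congr 2; ring
    filter_upwards [A,
      cv_sum s c (integrable_rlKer hr hγ) (fun i hi => integrable_damped hr (hα i hi) hu),
      cv_sum s c (integrable_rlKer hr hn) (fun i hi => integrable_damped hr (hδ i hi) hu)]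
      with t hA h1 h2 htb
    rw [hy, h2, ← Finset.sum_congr rfl (fun i hi => congrArg (c i * ·) (hA i hi)), ← h1]
    exact cv_rlKer_eq_zero heq htb
  have hbound : ∀ᵐ t, ‖c i₀‖ * ‖u t‖ ≤
      ∑ i ∈ s.erase i₀, ‖c i‖ * ‖damped r (α i - m) u t‖ := by
    filter_upwards [key] with t ht
    rcases lt_or_ge t b with h | h
    · have h1 := ht h
      simp only [hy] at h1
      rw [← Finset.add_sum_erase s _ hi₀] at h1
      have h2 : damped r (α i₀ - m) u = u := by simp [damped, m]
      rw [h2] at h1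
      rw [← norm_mul, eq_neg_of_add_eq_zero_left h1, norm_neg]
      exact (norm_sum_le _ _).trans (le_of_eq (by simp))
    · rw [hub t h]
      simp only [norm_zero, mul_zero]
      positivity
  have hle : ‖c i₀‖ * ∫ t, ‖u t‖ ≤
      (∑ i ∈ s.erase i₀, ‖c i‖ * (1 / r) ^ (α i - m)) * ∫ t, ‖u t‖ := by
    have hint : ∀ i ∈ s.erase i₀, Integrable fun t => ‖c i‖ * ‖damped r (α i - m) u t‖ :=
      fun i hi => (integrable_damped hr (hδ i (Finset.mem_of_mem_erase hi)) hu).norm.const_mul _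
    calc ‖c i₀‖ * ∫ t, ‖u t‖ = ∫ t, ‖c i₀‖ * ‖u t‖ := (integral_const_mul _ _).symm
      _ ≤ ∫ t, ∑ i ∈ s.erase i₀, ‖c i‖ * ‖damped r (α i - m) u t‖ :=
        integral_mono_ae (hu.norm.const_mul _) (integrable_finsetSum _ hint) hbound
      _ = ∑ i ∈ s.erase i₀, ‖c i‖ * ∫ t, ‖damped r (α i - m) u t‖ := by
        rw [integral_finsetSum _ hint]
        exact Finset.sum_congr rfl fun i _ => integral_const_mul _ _
      _ ≤ ∑ i ∈ s.erase i₀, ‖c i‖ * ((1 / r) ^ (α i - m) * ∫ t, ‖u t‖) := by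
        gcongr with i hi
        exact integral_norm_damped_le hr (hδ i (Finset.mem_of_mem_erase hi)) hu
      _ = _ := by rw [Finset.sum_mul]; simp only [mul_assoc]
  have hnn : 0 ≤ ∫ t, ‖u t‖ := integral_nonneg fun _ => norm_nonneg _
  have hz : ∫ t, ‖u t‖ = 0 := by nlinarith
  have := (integral_eq_zero_iff_of_nonneg (fun _ => norm_nonneg _) hu.norm).1 hz
  filter_upwards [this] with t ht
  simpa using ht

/-! ### Reduction to the damped equation -/

/-- Extension by zero of `e^(-rs) x(s)` from `(a,b)` to the line. -/
noncomputable def dampedExt (r a b : ℝ) (x : ℝ → ℂ) : ℝ → ℂ :=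
  (Ioo a b).indicator fun s => ((Real.exp (-(r * s)) : ℝ) : ℂ) * x s

lemma integrable_dampedExt (r a b : ℝ) {x : ℝ → ℂ} (hx : IntegrableOn x (Ioo a b)) :
    Integrable (dampedExt r a b x) := by
  rw [dampedExt, integrable_indicator_iff measurableSet_Ioo]
  exact hx.continuousOn_mul_of_subset (K := Icc a b) (by fun_prop) isCompact_Icc measurableSet_Ioo
    Ioo_subset_Icc_self

/-- Damping intertwines the Riemann–Liouville integral with `damped`. -/
lemma damped_dampedExt {r a b β : ℝ} (x : ℝ → ℂ) {t : ℝ} (ht : t ∈ Ioo a b) :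
    damped r β (dampedExt r a b x) t = ((Real.exp (-(r * t)) : ℝ) : ℂ) * rlInt a β x t := by
  unfold damped rlInt
  split_ifs with h
  · rw [dampedExt, indicator_of_mem ht]
  · simp only []
    rw [cv_apply_swap, intervalIntegral.integral_of_le ht.1.le, integral_Ioc_eq_integral_Ioo,
      ← integral_smul, ← integral_const_mul, ← integral_indicator measurableSet_Ioo]
    congr 1
    funext s
    by_cases hs : s ∈ Ioo a t
    · have hsb : s ∈ Ioo a b := ⟨hs.1, hs.2.trans ht.2⟩
      rw [indicator_of_mem hs, dampedExt, indicator_of_mem hsb, rlKer, rlKerReal,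
        indicator_of_mem (mem_Ioi.2 (sub_pos.2 hs.2))]
      have e3 : Real.exp (-(r * t)) = Real.exp (-(r * (t - s))) * Real.exp (-(r * s)) := by
        rw [← Real.exp_add]; congr 1; ring
      rw [e3, Complex.real_smul, Complex.real_smul]
      push_cast
      ring
    · rw [indicator_of_notMem hs]
      rcases lt_or_ge s t with h1 | h1
      · have : s ∉ Ioo a b := fun h2 => hs ⟨h2.1, h1⟩
        rw [dampedExt, indicator_of_notMem this, mul_zero]
      · simp [rlKer, rlKerReal_of_nonpos (show t - s ≤ 0 by linarith)]

lemma damped_sub {r β : ℝ} (hr : 0 < r) (hβ : 0 ≤ β) {u v : ℝ → ℂ} (hu : Integrable u)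
    (hv : Integrable v) : ∀ᵐ t, damped r β (u - v) t = damped r β u t - damped r β v t := by
  unfold damped
  split_ifs with h
  · simp
  · have hk := integrable_rlKer hr (lt_of_le_of_ne hβ (Ne.symm h))
    filter_upwards [ae_integrable_cv hk hu, ae_integrable_cv hk hv] with t h1 h2
    simp only [cv_apply, Pi.sub_apply, mul_sub]
    exact integral_sub h1 h2

/-- A linear fractional-order integral equation with constant coefficients and
pairwise distinct nonnegative rational orders, whose coefficients are not all zero, has at
most one solution in `L¹(a,b)`: if two integrable functions have a.e. equal images under
`Σ_i c_i · I_{a+}^{α_i}`, they agree a.e. on `(a,b)`. -/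
theorem fractional_integral_equation_uniqueness
    (a b : ℝ) (hab : a < b) (l : ℕ) (hl : 1 ≤ l)
    (α : Fin l → ℚ) (hα0 : ∀ i, 0 ≤ α i) (hαinj : Function.Injective α)
    (c : Fin l → ℂ) (hc : ∃ i, c i ≠ 0)
    (x₁ x₂ : ℝ → ℂ)
    (hx₁ : IntegrableOn x₁ (Set.Ioo a b)) (hx₂ : IntegrableOn x₂ (Set.Ioo a b))
    (heq : ∀ᵐ t ∂(volume.restrict (Set.Ioo a b)),
      ∑ i, c i * rlInt a (α i : ℝ) x₁ t = ∑ i, c i * rlInt a (α i : ℝ) x₂ t) :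
    ∀ᵐ t ∂(volume.restrict (Set.Ioo a b)), x₁ t = x₂ t := by
  classical
  set s : Finset (Fin l) := Finset.univ.filter fun i => c i ≠ 0 with hs
  obtain ⟨i₀, hi₀, hmin⟩ : ∃ i₀ ∈ s, ∀ i ∈ s, α i₀ ≤ α i :=
    s.exists_min_image α (by obtain ⟨i, hi⟩ := hc; exact ⟨i, by simpa [hs] using hi⟩)
  have hci₀ : 0 < ‖c i₀‖ := norm_pos_iff.2 (by simpa [hs] using hi₀)
  have hα0' : ∀ i, (0 : ℝ) ≤ α i := fun i => by exact_mod_cast hα0 i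
  -- All orders other than the lowest exceed it strictly, so their weights decay as `r → ∞`.
  have hlim : Tendsto (fun r : ℝ =>
      ∑ i ∈ s.erase i₀, ‖c i‖ * (1 / r) ^ ((α i : ℝ) - (α i₀ : ℝ))) atTop (𝓝 0) := by
    have : (0 : ℝ) = ∑ i ∈ s.erase i₀, ‖c i‖ * 0 := by simp
    rw [this]
    refine tendsto_finsetSum _ fun i hi => Tendsto.const_mul _ ?_
    rw [Finset.mem_erase] at hi
    have hlt : (0 : ℝ) < (α i : ℝ) - (α i₀ : ℝ) := by
      have : α i₀ < α i := lt_of_le_of_ne (hmin i hi.2) fun h => hi.1 (hαinj h).symm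
      exact sub_pos.2 (by exact_mod_cast this)
    refine (tendsto_rpow_neg_atTop hlt).congr' ?_
    filter_upwards [eventually_gt_atTop 0] with r hr
    rw [one_div, Real.inv_rpow hr.le, Real.rpow_neg hr.le]
  obtain ⟨r, hsmall, hr⟩ :=
    ((hlim.eventually_lt_const hci₀).and (eventually_gt_atTop 0)).exists
  have hu₁ := integrable_dampedExt r a b hx₁
  have hu₂ := integrable_dampedExt r a b hx₂
  set u := dampedExt r a b x₁ - dampedExt r a b x₂ with hu
  have hout : ∀ t, t ∉ Ioo a b → u t = 0 := fun t ht => by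
    simp [hu, dampedExt, indicator_of_notMem ht]
  have hu0 : u =ᵐ[volume] 0 := by
    refine damped_uniqueness s i₀ hi₀ (fun i => (α i : ℝ)) c hr (hα0' i₀)
      (fun i hi => by exact_mod_cast hmin i hi) hsmall (hu₁.sub hu₂)
      (b := b) (fun t ht => hout t fun h => (h.2.trans_le ht).false) ?_
    rw [ae_restrict_iff' measurableSet_Ioo] at heq
    have hsub : ∀ᵐ t, ∀ i, damped r (α i) u t =
        damped r (α i) (dampedExt r a b x₁) t - damped r (α i) (dampedExt r a b x₂) t :=
      ae_all_iff.2 fun i => damped_sub hr (hα0' i) hu₁ hu₂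
    have hne : ∀ᵐ t : ℝ, t ≠ a := Measure.ae_ne volume a
    filter_upwards [heq, hsub, hne] with t h1 h2 h3 htb
    rcases lt_or_gt_of_ne h3 with hta | hta
    -- To the left of `a` everything vanishes by causality.
    · refine Finset.sum_eq_zero fun i _ => ?_
      have hua : ∀ t, t < a → u t = 0 := fun t ht => hout t fun h => (h.1.trans ht).false
      have : damped r (α i) u t = 0 := by
        unfold damped
        split_ifs
        · exact hua t hta
        · exact cv_rlKer_eq_zero (Eventually.of_forall hua) hta
      simp [this]
    · have hmem : t ∈ Ioo a b := ⟨hta, htb⟩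
      have hall : ∑ i ∈ s, c i * damped r (α i) u t = ∑ i, c i * damped r (α i) u t := by
        refine Finset.sum_subset (Finset.subset_univ _) fun i _ hi => ?_
        have : c i = 0 := by simpa [hs] using hi
        simp [this]
      rw [hall]
      simp_rw [h2, damped_dampedExt _ hmem, ← mul_sub, mul_left_comm (c _)]
      rw [← Finset.mul_sum]
      simp_rw [mul_sub]
      rw [Finset.sum_sub_distrib, h1 hmem, sub_self, mul_zero]
  rw [ae_restrict_iff' measurableSet_Ioo]
  filter_upwards [hu0] with t ht hmem
  simp only [hu, Pi.sub_apply, dampedExt, indicator_of_mem hmem, Pi.zero_apply, ← mul_sub] at ht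
  refine sub_eq_zero.1 ((mul_eq_zero.1 ht).resolve_left ?_)
  exact_mod_cast (Real.exp_pos _).ne'
end
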